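/- For 1 ≤ m ≤ n, the set S_m of n×n complex Hermitian matrices A whose eigenvalue vector λ(A) lies in Γ̄_m is a convex cone: if A, B ∈ S_m and s, t ≥ 0, then sA + tB ∈ S_m. -/

import Mathlib

noncomputable section

/-- `σ_k(λ)`, the `k`-th elementary symmetric polynomial of `λ ∈ ℝⁿ`. -/
def esymm (n k : ℕ) (lam : Fin n → ℝ) : ℝ :=
  ∑ s ∈ Finset.univ.powersetCard k, ∏ i ∈ s, lam i

/-- The Gårding cone `Γ_m = {λ ∈ ℝⁿ : σ_1(λ) > 0, …, σ_m(λ) > 0}`. -/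
def gardingCone (n m : ℕ) : Set (Fin n → ℝ) :=
  {lam | ∀ k, 1 ≤ k → k ≤ m → 0 < esymm n k lam}

/-!
In an orthonormal eigenbasis of `s • A + t • B` the diagonals of `A` and `B` are doubly stochastic
images of their eigenvalue vectors (Schur). The closed Gårding cone is invariant under permutations,
so by Birkhoff's theorem everything reduces to its being a convex cone in `ℝⁿ`.

That is the Marcus–Lopes inequality: `q_k = σ_{k+1} / σ_k` is superadditive on `Γ_k`. Writing
`a ∥ b = a b / (a + b)` for the parallel sum, Euler's identity becomes
`(k + 2) q_{k+1}(x) = ∑ i, x i ∥ q_k(x without x i)`, and the parallel sum is superadditive and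
monotone where `a + b > 0`, so the inequality follows by induction on `k`. Newton's inequality
enters through the fact that deleting a variable maps `Γ_{k+1}` into `Γ_k`.
-/

open Finset Polynomial
open scoped Matrix

section Newton

lemma splits_derivative {p : ℝ[X]} (hp : p.Splits) : p.derivative.Splits := by
  rw [splits_iff_card_roots] at hp ⊢
  have rolle := card_roots_le_derivative p
  have card_le := p.derivative.card_roots'
  by_cases hdeg : p.natDegree = 0
  · rw [derivative_of_natDegree_zero hdeg, roots_zero, Multiset.card_zero, natDegree_zero]
  · have := natDegree_derivative_lt hdeg
    omega

lemma two_mul_coeff_zero_mul_coeff_two_le_of_splits {K : Type*} [Field K] [LinearOrder K]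
    [IsStrictOrderedRing K] {p : K[X]} (hp : p.Splits) :
    2 * (p.coeff 0 * p.coeff 2) ≤ p.coeff 1 ^ 2 := by
  induction hp using Submonoid.closure_induction with
  | mem p hp => rcases hp with ⟨a, rfl⟩ | ⟨a, rfl⟩ <;> simp [coeff_C, coeff_X]
  | one => simp [coeff_one]
  | mul f g _ _ hf hg =>
    have coeff_two : (f * g).coeff 2 =
        f.coeff 0 * g.coeff 2 + f.coeff 1 * g.coeff 1 + f.coeff 2 * g.coeff 0 := by
      simp [coeff_mul, Nat.sum_antidiagonal_eq_sum_range_succ_mk, sum_range_succ]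
    rw [coeff_two, mul_coeff_zero, mul_coeff_one]
    linear_combination f.coeff 0 ^ 2 * hg + g.coeff 0 ^ 2 * hf

-- The case `k = 0` applied to the `k`-th derivative, which splits by Rolle's theorem.
lemma newton_inequality (k : ℕ) {p : ℝ[X]} (hp : p.Splits) :
    (k + 2) * (p.coeff k * p.coeff (k + 2)) ≤ (k + 1) * p.coeff (k + 1) ^ 2 := by
  induction k generalizing p with
  | zero => simpa using two_mul_coeff_zero_mul_coeff_two_le_of_splits hp
  | succ k ih =>
    have h := ih (splits_derivative hp)
    simp only [coeff_derivative] at h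
    push_cast at h ⊢
    refine le_of_mul_le_mul_left ?_ (by positivity : (0 : ℝ) < (k + 1) * (k + 2))
    linear_combination h

lemma coeff_mul_coeff_le_sq_of_splits (k : ℕ) {p : ℝ[X]} (hp : p.Splits) :
    p.coeff k * p.coeff (k + 2) ≤ p.coeff (k + 1) ^ 2 := by
  rcases le_or_gt (p.coeff k * p.coeff (k + 2)) 0 with hneg | hpos
  · exact hneg.trans (sq_nonneg _)
  · refine le_of_mul_le_mul_left ?_ (by positivity : (0 : ℝ) < k + 1)
    linear_combination newton_inequality k hp + hpos

end Newton

section ElementarySymmetric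

variable {ι R : Type*}

/-- The `k`-th elementary symmetric polynomial in the variables `x i` with `i ∈ s`. Unlike
`esymm` it allows any index set, so that variables can be deleted by passing to `s.erase i`. -/
def esymmOn [CommSemiring R] (s : Finset ι) (k : ℕ) (x : ι → R) : R :=
  (s.val.map x).esymm k

lemma esymm_eq_esymmOn_univ (n k : ℕ) (x : Fin n → ℝ) : esymm n k x = esymmOn univ k x :=
  (esymm_map_val x univ k).symm

section CommSemiring

variable [CommSemiring R] (s : Finset ι) (k : ℕ) (x : ι → R)

lemma coeff_prod_one_add_C_mul_X : (∏ i ∈ s, (1 + C (x i) * X)).coeff k = esymmOn s k x := by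
  rw [esymmOn, esymm_map_val, prod_one_add, finsetSum_coeff, powersetCard_eq_filter, sum_filter]
  refine sum_congr rfl fun t _ ↦ ?_
  rw [prod_mul_distrib, prod_const, ← map_prod, coeff_C_mul_X_pow]
  simp only [eq_comm]

@[simp]
lemma esymmOn_zero : esymmOn s 0 x = 1 := by
  simp [esymmOn, Multiset.esymm]

lemma esymmOn_smul (c : R) : esymmOn s k (c • x) = c ^ k * esymmOn s k x := by
  simpa [esymmOn] using (Multiset.pow_smul_esymm c k (s.val.map x)).symm

lemma esymmOn_univ_comp_perm [Fintype ι] (σ : Equiv.Perm ι) :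
    esymmOn univ k (x ∘ σ) = esymmOn univ k x := by
  rw [esymmOn, ← Multiset.map_map, Multiset.map_univ_val_equiv, esymmOn]

variable [DecidableEq ι]

variable {s} in
lemma esymmOn_succ_of_mem {i : ι} (hi : i ∈ s) :
    esymmOn s (k + 1) x = esymmOn (s.erase i) (k + 1) x + x i * esymmOn (s.erase i) k x := by
  have hs : s.val.map x = x i ::ₘ (s.erase i).val.map x := by
    rw [erase_val, ← Multiset.map_cons, Multiset.cons_erase hi]
  simp [esymmOn, hs, Multiset.esymm, Multiset.powersetCard_cons, Multiset.sum_map_mul_left]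

-- Compare the coefficients of `T ^ k` in the derivative of `∏ i ∈ s, (1 + x i * T)`.
lemma succ_mul_esymmOn_succ :
    (k + 1) * esymmOn s (k + 1) x = ∑ i ∈ s, x i * esymmOn (s.erase i) k x := by
  have h := coeff_derivative (∏ i ∈ s, (1 + C (x i) * X)) k
  rw [coeff_prod_one_add_C_mul_X, derivative_prod_finset, finsetSum_coeff] at h
  rw [mul_comm, ← h]
  refine sum_congr rfl fun i _ ↦ ?_
  have hderiv : derivative (1 + C (x i) * X) = C (x i) := by simp
  rw [hderiv, coeff_mul_C, coeff_prod_one_add_C_mul_X, mul_comm]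

end CommSemiring

lemma esymmOn_mul_esymmOn_le_sq (s : Finset ι) (k : ℕ) (x : ι → ℝ) :
    esymmOn s k x * esymmOn s (k + 2) x ≤ esymmOn s (k + 1) x ^ 2 := by
  simp only [← coeff_prod_one_add_C_mul_X]
  refine coeff_mul_coeff_le_sq_of_splits k (Splits.prod fun i _ ↦ ?_)
  exact Splits.of_natDegree_le_one (by compute_degree)

/-- The quotient `σ_{k+1} / σ_k` of consecutive elementary symmetric polynomials in the variables
`x i` with `i ∈ s`; it takes the junk value `0` where `σ_k` vanishes. -/
def esymmRatio [Field R] (s : Finset ι) (k : ℕ) (x : ι → R) : R :=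
  esymmOn s (k + 1) x / esymmOn s k x

lemma esymmRatio_zero [Field R] (s : Finset ι) (x : ι → R) : esymmRatio s 0 x = ∑ i ∈ s, x i := by
  classical simpa [esymmRatio] using succ_mul_esymmOn_succ s 0 x

lemma add_esymmRatio_erase [Field R] [DecidableEq ι] {s : Finset ι} {i : ι} (hi : i ∈ s) {k : ℕ}
    {x : ι → R} (h : esymmOn (s.erase i) k x ≠ 0) :
    x i + esymmRatio (s.erase i) k x = esymmOn s (k + 1) x / esymmOn (s.erase i) k x := by
  rw [esymmRatio, esymmOn_succ_of_mem k x hi, add_div, mul_div_cancel_right₀ _ h, add_comm]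

end ElementarySymmetric

section ParallelSum

variable {K : Type*} [Field K] [LinearOrder K] [IsStrictOrderedRing K]

/-- The parallel sum `(a⁻¹ + b⁻¹)⁻¹`, written so that it makes sense when `a` or `b` vanishes.
It takes the junk value `0` when `a + b = 0`. -/
def parallelSum (a b : K) : K := a * b / (a + b)

lemma parallelSum_le_parallelSum_right {a b c : K} (hab : 0 < a + b) (hbc : b ≤ c) :
    parallelSum a b ≤ parallelSum a c := by
  rw [parallelSum, parallelSum, div_le_div_iff₀ hab (by linarith)]
  linear_combination a ^ 2 * hbc

lemma parallelSum_add_parallelSum_le {a b c d : K} (hab : 0 < a + b) (hcd : 0 < c + d) :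
    parallelSum a b + parallelSum c d ≤ parallelSum (a + c) (b + d) := by
  have hsum : 0 < a + c + (b + d) := by linarith
  have hdiff : parallelSum (a + c) (b + d) - (parallelSum a b + parallelSum c d) =
      (a * d - b * c) ^ 2 / ((a + b) * (c + d) * (a + c + (b + d))) := by
    unfold parallelSum
    field_simp
    ring
  rw [← sub_nonneg, hdiff]
  positivity

end ParallelSum

section GardingCone

variable {ι : Type*} {s : Finset ι} {k : ℕ} {x y : ι → ℝ}

/-- The Gårding cone `Γ_k` in the variables `x i` with `i ∈ s`, the other coordinates of `x` being
unconstrained. The condition at `j = 0` is automatic since `σ_0 = 1`. -/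
def gardingConeOn (s : Finset ι) (k : ℕ) : Set (ι → ℝ) :=
  {x | ∀ j ≤ k, 0 < esymmOn s j x}

lemma gardingCone_eq_gardingConeOn_univ (n m : ℕ) : gardingCone n m = gardingConeOn univ m := by
  ext x
  refine ⟨fun hx j hj ↦ ?_, fun hx j _ hj ↦ ?_⟩
  · rcases Nat.eq_zero_or_pos j with rfl | hj_pos
    · simp
    · exact esymm_eq_esymmOn_univ n j x ▸ hx j hj_pos hj
  · exact esymm_eq_esymmOn_univ n j x ▸ hx j hj

lemma mem_gardingConeOn_zero (s : Finset ι) (x : ι → ℝ) : x ∈ gardingConeOn s 0 := by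
  simp [gardingConeOn]

lemma mem_gardingConeOn_succ_iff :
    x ∈ gardingConeOn s (k + 1) ↔ x ∈ gardingConeOn s k ∧ 0 < esymmOn s (k + 1) x := by
  simp [gardingConeOn, Nat.le_succ_iff, or_imp, forall_and]

lemma mem_gardingConeOn_succ_iff_esymmRatio_pos :
    x ∈ gardingConeOn s (k + 1) ↔ x ∈ gardingConeOn s k ∧ 0 < esymmRatio s k x := by
  rw [mem_gardingConeOn_succ_iff]
  exact and_congr_right fun hx ↦ (div_pos_iff_of_pos_right (hx k le_rfl)).symm

lemma smul_mem_gardingConeOn (hx : x ∈ gardingConeOn s k) {c : ℝ} (hc : 0 < c) :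
    c • x ∈ gardingConeOn s k := fun j hj ↦ by
  rw [esymmOn_smul]
  exact mul_pos (pow_pos hc j) (hx j hj)

lemma comp_perm_mem_gardingConeOn_univ [Fintype ι] (hx : x ∈ gardingConeOn univ k)
    (σ : Equiv.Perm ι) : x ∘ σ ∈ gardingConeOn univ k := fun j hj ↦ by
  rw [esymmOn_univ_comp_perm]
  exact hx j hj

section Erase

variable [DecidableEq ι] {i : ι}

lemma mem_gardingConeOn_erase (hi : i ∈ s) (hx : x ∈ gardingConeOn s (k + 1)) :
    x ∈ gardingConeOn (s.erase i) k := by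
  induction k with
  | zero => exact mem_gardingConeOn_zero _ x
  | succ k ih =>
    obtain ⟨hx, hpos₂⟩ := mem_gardingConeOn_succ_iff.1 hx
    have hx_erase := ih hx
    have hpos₁ := hx (k + 1) le_rfl
    rw [esymmOn_succ_of_mem _ x hi] at hpos₁ hpos₂
    refine mem_gardingConeOn_succ_iff.2 ⟨hx_erase, ?_⟩
    set a := esymmOn (s.erase i) k x
    set b := esymmOn (s.erase i) (k + 1) x
    set c := esymmOn (s.erase i) (k + 2) x
    have ha : 0 < a := hx_erase k le_rfl
    have newton : a * c ≤ b ^ 2 := esymmOn_mul_esymmOn_le_sq _ k x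
    have hprod : 0 < b * (b + x i * a) := calc
      0 < a * (c + x i * b) := mul_pos ha hpos₂
      _ ≤ b * (b + x i * a) := by linear_combination newton
    exact (pos_iff_pos_of_mul_pos hprod).2 hpos₁

lemma add_esymmRatio_erase_pos (hi : i ∈ s) (hx : x ∈ gardingConeOn s (k + 1)) :
    0 < x i + esymmRatio (s.erase i) k x := by
  have h_erase := mem_gardingConeOn_erase hi hx k le_rfl
  rw [add_esymmRatio_erase hi h_erase.ne']
  exact div_pos (hx _ le_rfl) h_erase

lemma succ_mul_esymmRatio_succ_eq_sum_parallelSum (hx : x ∈ gardingConeOn s (k + 1)) :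
    (k + 2) * esymmRatio s (k + 1) x =
      ∑ i ∈ s, parallelSum (x i) (esymmRatio (s.erase i) k x) := by
  have euler := succ_mul_esymmOn_succ s (k + 1) x
  have hs := (hx (k + 1) le_rfl).ne'
  calc (k + 2) * esymmRatio s (k + 1) x
      = (∑ i ∈ s, x i * esymmOn (s.erase i) (k + 1) x) / esymmOn s (k + 1) x := by
        rw [← euler, esymmRatio]
        push_cast
        ring
    _ = ∑ i ∈ s, x i * esymmOn (s.erase i) (k + 1) x / esymmOn s (k + 1) x := sum_div ..
    _ = ∑ i ∈ s, parallelSum (x i) (esymmRatio (s.erase i) k x) := by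
        refine sum_congr rfl fun i hi ↦ ?_
        have h_erase := (mem_gardingConeOn_erase hi hx k le_rfl).ne'
        rw [parallelSum, add_esymmRatio_erase hi h_erase, esymmRatio]
        field_simp

end Erase

-- The two claims need each other: positivity of `σ_{k+1}` at `x + y` comes from the inequality for
-- `σ_{k+1} / σ_k`, while the inequality for the next ratio needs `x + y ∈ Γ_{k+1}`.
theorem add_mem_gardingConeOn_and_esymmRatio_add_le (hx : x ∈ gardingConeOn s k)
    (hy : y ∈ gardingConeOn s k) :
    x + y ∈ gardingConeOn s k ∧ esymmRatio s k x + esymmRatio s k y ≤ esymmRatio s k (x + y) := by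
  classical
  induction k generalizing s with
  | zero =>
    refine ⟨mem_gardingConeOn_zero s _, ?_⟩
    simp only [esymmRatio_zero, Pi.add_apply, sum_add_distrib, le_refl]
  | succ k ih =>
    have hxy : x + y ∈ gardingConeOn s (k + 1) := by
      rw [mem_gardingConeOn_succ_iff_esymmRatio_pos] at hx hy ⊢
      obtain ⟨hmem, hratio⟩ := ih hx.1 hy.1
      exact ⟨hmem, (add_pos hx.2 hy.2).trans_le hratio⟩
    refine ⟨hxy, le_of_mul_le_mul_left ?_ (by positivity : (0 : ℝ) < k + 2)⟩
    rw [mul_add, succ_mul_esymmRatio_succ_eq_sum_parallelSum hx,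
      succ_mul_esymmRatio_succ_eq_sum_parallelSum hy,
      succ_mul_esymmRatio_succ_eq_sum_parallelSum hxy, ← sum_add_distrib]
    refine sum_le_sum fun i hi ↦ ?_
    have hxi := add_esymmRatio_erase_pos hi hx
    have hyi := add_esymmRatio_erase_pos hi hy
    have hratio := (ih (mem_gardingConeOn_erase hi hx) (mem_gardingConeOn_erase hi hy)).2
    calc parallelSum (x i) (esymmRatio (s.erase i) k x)
          + parallelSum (y i) (esymmRatio (s.erase i) k y)
        ≤ parallelSum (x i + y i) (esymmRatio (s.erase i) k x + esymmRatio (s.erase i) k y) :=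
          parallelSum_add_parallelSum_le hxi hyi
      _ ≤ parallelSum (x i + y i) (esymmRatio (s.erase i) k (x + y)) :=
          parallelSum_le_parallelSum_right (by linarith) hratio

lemma add_mem_gardingConeOn (hx : x ∈ gardingConeOn s k) (hy : y ∈ gardingConeOn s k) :
    x + y ∈ gardingConeOn s k :=
  (add_mem_gardingConeOn_and_esymmRatio_add_le hx hy).1

lemma smul_add_smul_mem_closure_gardingConeOn (hx : x ∈ closure (gardingConeOn s k))
    (hy : y ∈ closure (gardingConeOn s k)) {a b : ℝ} (ha : 0 ≤ a) (hb : 0 ≤ b) :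
    a • x + b • y ∈ closure (gardingConeOn s k) := by
  have smul_mem {z : ι → ℝ} (hz : z ∈ closure (gardingConeOn s k)) {c : ℝ} (hc : 0 ≤ c) :
      c • z ∈ closure (gardingConeOn s k) :=
    map_mem_closure₂ continuous_smul (closure_Ioi (0 : ℝ) ▸ hc : c ∈ closure (Set.Ioi 0)) hz
      fun _ hc _ hz ↦ smul_mem_gardingConeOn hz hc
  exact map_mem_closure₂ continuous_add (smul_mem hx ha) (smul_mem hy hb)
    fun _ hx _ hy ↦ add_mem_gardingConeOn hx hy

lemma convex_closure_gardingConeOn (s : Finset ι) (k : ℕ) :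
    Convex ℝ (closure (gardingConeOn s k)) :=
  fun _ hx _ hy _ _ ha hb _ ↦ smul_add_smul_mem_closure_gardingConeOn hx hy ha hb

lemma comp_perm_mem_closure_gardingConeOn_univ [Fintype ι]
    (hx : x ∈ closure (gardingConeOn univ k)) (σ : Equiv.Perm ι) :
    x ∘ σ ∈ closure (gardingConeOn univ k) :=
  map_mem_closure (f := (· ∘ σ)) (by fun_prop) hx
    fun _ hz ↦ comp_perm_mem_gardingConeOn_univ hz σ

end GardingCone

section DoublyStochastic

variable {ι : Type*} [Fintype ι] [DecidableEq ι]

lemma mulVec_mem_of_mem_doublyStochastic {K : Type*} [Field K] [LinearOrder K]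
    [IsStrictOrderedRing K] {S : Set (ι → K)} (hS : Convex K S) {x : ι → K}
    (hx : ∀ σ : Equiv.Perm ι, x ∘ σ ∈ S) {D : Matrix ι ι K} (hD : D ∈ doublyStochastic K ι) :
    D *ᵥ x ∈ S := by
  obtain ⟨w, hw_nonneg, hw_sum, rfl⟩ := exists_eq_sum_perm_of_mem_doublyStochastic hD
  simp only [Matrix.sum_mulVec, Matrix.smul_mulVec, Matrix.permMatrix_mulVec]
  exact hS.sum_mem (fun σ _ ↦ hw_nonneg σ) hw_sum fun σ _ ↦ hx σ

lemma mulVec_mem_closure_gardingConeOn_univ {k : ℕ} {x : ι → ℝ}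
    (hx : x ∈ closure (gardingConeOn univ k)) {D : Matrix ι ι ℝ}
    (hD : D ∈ doublyStochastic ℝ ι) : D *ᵥ x ∈ closure (gardingConeOn univ k) :=
  mulVec_mem_of_mem_doublyStochastic (convex_closure_gardingConeOn univ k)
    (comp_perm_mem_closure_gardingConeOn_univ hx) hD

end DoublyStochastic

section Schur

variable {ι κ 𝕜 : Type*} [RCLike 𝕜]

/-- The matrix of squared moduli of the entries of `W`. For unitary `W` these are the unistochastic
matrices, which express the diagonal of a Hermitian matrix through its eigenvalues. -/
def normSqMatrix (W : Matrix ι κ 𝕜) : Matrix ι κ ℝ := W.map fun z ↦ ‖z‖ ^ 2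

lemma normSqMatrix_conjTranspose (W : Matrix ι κ 𝕜) : normSqMatrix Wᴴ = (normSqMatrix W)ᵀ := by
  ext i j
  simp [normSqMatrix]

lemma mul_diagonal_mul_conjTranspose_apply_self [Fintype κ] [DecidableEq κ] (W : Matrix ι κ 𝕜)
    (d : κ → ℝ) (i : ι) :
    (W * Matrix.diagonal (RCLike.ofReal ∘ d : κ → 𝕜) * Wᴴ) i i = ((normSqMatrix W *ᵥ d) i : 𝕜) := by
  simp only [Matrix.mul_apply (N := Wᴴ), Matrix.mul_diagonal, Matrix.conjTranspose_apply,
    Matrix.mulVec, dotProduct, normSqMatrix, Matrix.map_apply, Function.comp_apply, map_sum,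
    map_mul, map_pow, ← RCLike.mul_conj, starRingEnd_apply]
  exact sum_congr rfl fun j _ ↦ by ring

lemma normSqMatrix_mulVec_one [DecidableEq ι] [Fintype κ] {W : Matrix ι κ 𝕜} (hW : W * Wᴴ = 1) :
    normSqMatrix W *ᵥ 1 = 1 := by
  classical
  ext i
  have h := mul_diagonal_mul_conjTranspose_apply_self W 1 i
  have hone : (RCLike.ofReal ∘ 1 : κ → 𝕜) = 1 := by ext; simp
  rw [hone, Matrix.diagonal_one', Matrix.mul_one, hW, Matrix.one_apply_eq] at h
  exact_mod_cast h.symm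

variable [Fintype ι] [DecidableEq ι]

lemma normSqMatrix_mem_doublyStochastic (U : Matrix.unitaryGroup ι 𝕜) :
    normSqMatrix (U : Matrix ι ι 𝕜) ∈ doublyStochastic ℝ ι := by
  refine mem_doublyStochastic.2 ⟨fun i j ↦ sq_nonneg _, ?_, ?_⟩
  · exact normSqMatrix_mulVec_one (Unitary.coe_mul_star_self U)
  · rw [← Matrix.mulVec_transpose, ← normSqMatrix_conjTranspose]
    refine normSqMatrix_mulVec_one ?_
    rw [Matrix.conjTranspose_conjTranspose]
    exact Unitary.coe_star_mul_self U

variable {A B : Matrix ι ι 𝕜}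

theorem exists_doublyStochastic_conj_apply_self (hA : A.IsHermitian)
    (U : Matrix.unitaryGroup ι 𝕜) :
    ∃ D ∈ doublyStochastic ℝ ι, ∀ i,
      ((U : Matrix ι ι 𝕜)ᴴ * A * (U : Matrix ι ι 𝕜)) i i = ((D *ᵥ hA.eigenvalues) i : 𝕜) := by
  set W := star U * hA.eigenvectorUnitary
  refine ⟨_, normSqMatrix_mem_doublyStochastic W, fun i ↦ ?_⟩
  have hconj : (U : Matrix ι ι 𝕜)ᴴ * A * (U : Matrix ι ι 𝕜) =
      (W : Matrix ι ι 𝕜) * Matrix.diagonal (RCLike.ofReal ∘ hA.eigenvalues) *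
        (W : Matrix ι ι 𝕜)ᴴ := by
    conv_lhs => rw [hA.spectral_theorem, Unitary.conjStarAlgAut_apply]
    simp [W, Matrix.star_eq_conjTranspose, mul_assoc]
  rw [hconj, mul_diagonal_mul_conjTranspose_apply_self]

theorem exists_doublyStochastic_eigenvalues_smul_add_smul (hA : A.IsHermitian)
    (hB : B.IsHermitian) {s t : ℝ} (h : (s • A + t • B).IsHermitian) :
    ∃ D ∈ doublyStochastic ℝ ι, ∃ E ∈ doublyStochastic ℝ ι,
      h.eigenvalues = s • D *ᵥ hA.eigenvalues + t • E *ᵥ hB.eigenvalues := by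
  set U := h.eigenvectorUnitary
  obtain ⟨D, hD, hAD⟩ := exists_doublyStochastic_conj_apply_self hA U
  obtain ⟨E, hE, hBE⟩ := exists_doublyStochastic_conj_apply_self hB U
  refine ⟨D, hD, E, hE, funext fun i ↦ RCLike.ofReal_injective (K := 𝕜) ?_⟩
  have hdiag : (U : Matrix ι ι 𝕜)ᴴ * (s • A + t • B) * (U : Matrix ι ι 𝕜) =
      Matrix.diagonal (RCLike.ofReal ∘ h.eigenvalues) := by
    rw [← h.conjStarAlgAut_star_eigenvectorUnitary, Unitary.conjStarAlgAut_star_apply,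
      Matrix.star_eq_conjTranspose]
  calc (h.eigenvalues i : 𝕜)
      = ((U : Matrix ι ι 𝕜)ᴴ * (s • A + t • B) * (U : Matrix ι ι 𝕜)) i i := by
        rw [hdiag, Matrix.diagonal_apply_eq, Function.comp_apply]
    _ = s • ((U : Matrix ι ι 𝕜)ᴴ * A * (U : Matrix ι ι 𝕜)) i i
          + t • ((U : Matrix ι ι 𝕜)ᴴ * B * (U : Matrix ι ι 𝕜)) i i := by
        simp only [mul_add, add_mul, Matrix.mul_smul, Matrix.smul_mul, Matrix.add_apply,
          Matrix.smul_apply]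
    _ = ((s • D *ᵥ hA.eigenvalues + t • E *ᵥ hB.eigenvalues) i : ℝ) := by
        simp [hAD, hBE, RCLike.real_smul_eq_coe_mul]

end Schur

theorem hermitian_gardingCone_convex_cone_general {𝕜 : Type*} [RCLike 𝕜]
    (n m : ℕ) (A B : Matrix (Fin n) (Fin n) 𝕜)
    (hA : A.IsHermitian) (hB : B.IsHermitian)
    (hAg : hA.eigenvalues ∈ closure (gardingCone n m))
    (hBg : hB.eigenvalues ∈ closure (gardingCone n m))
    (s t : ℝ) (hs : 0 ≤ s) (ht : 0 ≤ t) :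
    ∃ h : (s • A + t • B).IsHermitian,
      h.eigenvalues ∈ closure (gardingCone n m) := by
  have h : (s • A + t • B).IsHermitian :=
    (hA.smul (IsSelfAdjoint.all s)).add (hB.smul (IsSelfAdjoint.all t))
  refine ⟨h, ?_⟩
  rw [gardingCone_eq_gardingConeOn_univ] at hAg hBg ⊢
  obtain ⟨D, hD, E, hE, h_eigenvalues⟩ := exists_doublyStochastic_eigenvalues_smul_add_smul hA hB h
  rw [h_eigenvalues]
  exact smul_add_smul_mem_closure_gardingConeOn (mulVec_mem_closure_gardingConeOn_univ hAg hD)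
    (mulVec_mem_closure_gardingConeOn_univ hBg hE) hs ht

/-- The set of Hermitian `n×n` matrices whose eigenvalue vector lies in `Γ̄_m` is a
convex cone: it is stable under nonnegative combinations `s•A + t•B`. -/
theorem hermitian_gardingCone_convex_cone
    (n m : ℕ) (hm : 1 ≤ m) (hmn : m ≤ n)
    (A B : Matrix (Fin n) (Fin n) ℂ)
    (hA : A.IsHermitian) (hB : B.IsHermitian)
    (hAg : hA.eigenvalues ∈ closure (gardingCone n m))
    (hBg : hB.eigenvalues ∈ closure (gardingCone n m))
    (s t : ℝ) (hs : 0 ≤ s) (ht : 0 ≤ t) :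
    ∃ h : (s • A + t • B).IsHermitian,
      h.eigenvalues ∈ closure (gardingCone n m) :=
  hermitian_gardingCone_convex_cone_general n m A B hA hB hAg hBg s t hs ht
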